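/- Let (X,T) be a dynamical system, let (z_n)_{n=1}^∞ be a sequence in X, and let (q_n)_{n=1}^∞ be a sequence in ℕ with q_n → ∞. Suppose the empirical measures m_{T, z_n, q_n} converge weak-* to a T-invariant Borel probability measure μ. Let K ∈ ℕ and set p_n = ⌊q_n / K⌋. If the restriction of T^K to the support of μ is uniquely ergodic (so that μ is its unique invariant Borel probability measure), then m_{T^K, z_n, p_n} → μ in the weak-* topology. -/

import Mathlib

/-!
By weak-* compactness of the finite measures of mass at most one, it suffices that every
weak-* cluster point `ν` of the measures `m_{T^K, zₙ, ⌊qₙ/K⌋}` equals `μ`. Such a `ν` is a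
`T^K`-invariant probability measure by the telescoping argument of Krylov and Bogolyubov. The
`T^K`-orbit segment of length `⌊q/K⌋` lies inside the `T`-orbit segment of length `q`, and
`q ≤ 2K⌊q/K⌋` once `q ≥ K`, so `∫ g ∂ν ≤ 2K ∫ g ∂μ` for every continuous `g ≥ 0`. Hence
`supp ν ⊆ supp μ`, and unique ergodicity on `supp μ` gives `ν = μ`.
-/

open MeasureTheory Topology Filter

/-- The support of a measure. -/
def msupport {X : Type*} [TopologicalSpace X] [MeasurableSpace X] (μ : Measure X) : Set X :=
  {x : X | ∀ O : Set X, IsOpen O → x ∈ O → 0 < μ O}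

open scoped NNReal BoundedContinuousFunction

section Birkhoff

variable {α ι : Type*} {l : Filter ι}

lemma birkhoffSum_iterate_le {M : Type*} [AddCommMonoid M] [PartialOrder M] [IsOrderedAddMonoid M]
    (f : α → α) {g : α → M} (hg : 0 ≤ g) {k m n : ℕ} (hk : k ≠ 0) (hmn : k * m ≤ n) (x : α) :
    birkhoffSum f^[k] g m x ≤ birkhoffSum f g n x := by
  have hinj : Set.InjOn (k * ·) (Finset.range m : Set ℕ) :=
    (mul_right_injective₀ hk).injOn
  calc
    birkhoffSum f^[k] g m x = ∑ j ∈ (Finset.range m).image (k * ·), g (f^[j] x) := by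
      simp only [birkhoffSum, Finset.sum_image hinj, Function.iterate_mul]
    _ ≤ birkhoffSum f g n x := by
      refine Finset.sum_le_sum_of_subset_of_nonneg ?_ fun j _ _ ↦ hg _
      refine Finset.image_subset_iff.2 fun i hi ↦ Finset.mem_range.2 ?_
      exact (Nat.mul_lt_mul_of_pos_left (Finset.mem_range.1 hi) hk.bot_lt).trans_le hmn

lemma inv_natCast_div_le {k : ℕ} (hk : k ≠ 0) (n : ℕ) :
    ((n / k : ℕ) : ℝ)⁻¹ ≤ 2 * k * (n : ℝ)⁻¹ := by
  rcases Nat.eq_zero_or_pos (n / k) with h | h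
  · rw [h, Nat.cast_zero, inv_zero]
    positivity
  · have hn : 0 < n := h.trans_le (Nat.div_le_self n k)
    have hle : n ≤ 2 * k * (n / k) := by
      nlinarith [Nat.lt_mul_div_succ n hk.bot_lt]
    rw [← div_eq_mul_inv, inv_eq_one_div, div_le_div_iff₀ (by positivity) (by positivity), one_mul]
    exact_mod_cast hle

lemma birkhoffAverage_iterate_div_le (f : α → α) {g : α → ℝ} (hg : 0 ≤ g) {k : ℕ} (hk : k ≠ 0)
    (n : ℕ) (x : α) :
    birkhoffAverage ℝ f^[k] g (n / k) x ≤ 2 * k * birkhoffAverage ℝ f g n x := by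
  have hsum : 0 ≤ birkhoffSum f g n x := Finset.sum_nonneg fun i _ ↦ hg _
  calc
    birkhoffAverage ℝ f^[k] g (n / k) x ≤ ((n / k : ℕ) : ℝ)⁻¹ * birkhoffSum f g n x :=
      mul_le_mul_of_nonneg_left (birkhoffSum_iterate_le f hg hk (Nat.mul_div_le n k) x)
        (by positivity)
    _ ≤ 2 * k * (n : ℝ)⁻¹ * birkhoffSum f g n x :=
      mul_le_mul_of_nonneg_right (inv_natCast_div_le hk n) hsum
    _ = 2 * k * birkhoffAverage ℝ f g n x := mul_assoc _ _ _

lemma tendsto_birkhoffAverage_apply_sub_birkhoffAverage_of_isBounded (𝕜 : Type*) {E : Type*}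
    [RCLike 𝕜] [NormedAddCommGroup E] [NormedSpace 𝕜 E] (f : α → α) {g : α → E}
    (hg : Bornology.IsBounded (Set.range g)) (x : ι → α) {n : ι → ℕ} (hn : Tendsto n l atTop) :
    Tendsto (fun i ↦ birkhoffAverage 𝕜 f g (n i) (f (x i)) - birkhoffAverage 𝕜 f g (n i) (x i))
      l (𝓝 0) := by
  obtain ⟨C, hC⟩ := Metric.isBounded_range_iff.1 hg
  have hlim : Tendsto (fun i ↦ C / n i) l (𝓝 0) :=
    tendsto_const_nhds.div_atTop (tendsto_natCast_atTop_atTop.comp hn)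
  refine squeeze_zero_norm (fun i ↦ ?_) hlim
  rw [← dist_eq_norm, dist_birkhoffAverage_apply_birkhoffAverage]
  gcongr
  exact hC _ _

end Birkhoff

section Support

variable {X : Type*} [TopologicalSpace X] [MeasurableSpace X]

lemma msupport_eq_support (μ : Measure X) : msupport μ = μ.support := by
  simp only [msupport, Measure.support_eq_forall_isOpen, imp.swap (b := IsOpen _)]

lemma support_subset_support_of_integral_le [CompletelyRegularSpace X] [OpensMeasurableSpace X]
    {μ ν : Measure X} [IsFiniteMeasure ν] (C : ℝ)
    (h : ∀ g : X →ᵇ ℝ, 0 ≤ g → ∫ x, g x ∂ν ≤ C * ∫ x, g x ∂μ) :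
    ν.support ⊆ μ.support := by
  intro x
  contrapose
  simp only [Measure.notMem_support_iff_exists]
  rintro ⟨O, hO, hμO⟩
  obtain ⟨f, hfx, hfO⟩ := CompletelyRegularSpace.exists_BCNN isOpen_interior.isClosed_compl
    (not_not.2 (mem_interior_iff_mem_nhds.2 hO))
  let g : X →ᵇ ℝ := f.comp _ NNReal.isometry_coe.lipschitz
  have hg : 0 ≤ g := fun y ↦ (f y).coe_nonneg
  have hgμ : ∫ y, g y ∂μ = 0 := by
    refine integral_eq_zero_of_ae ?_
    filter_upwards [measure_eq_zero_iff_ae_notMem.1 hμO] with y hy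
    simp [g, hfO y (fun hy' ↦ hy (interior_subset hy'))]
  have hgν : ∫ y, g y ∂ν = 0 :=
    le_antisymm (by simpa [hgμ] using h g hg) (integral_nonneg hg)
  refine ⟨{y | g y ≠ 0}, ?_, ?_⟩
  · exact (isOpen_ne_fun g.continuous continuous_const).mem_nhds (by simp [g, hfx])
  · exact (integral_eq_zero_iff_of_nonneg hg (g.integrable ν)).1 hgν

end Support

section EmpiricalMeasure

variable {X ι : Type*} [MeasurableSpace X]

/-- The empirical measure `m_{T,x,n}`, i.e. the Birkhoff average of the Dirac masses along the
orbit of `x`. It is a `FiniteMeasure` so that `n = 0` is allowed, where it is the zero measure. -/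
noncomputable def empiricalMeasure (T : X → X) (x : X) (n : ℕ) : FiniteMeasure X :=
  birkhoffAverage ℝ≥0 T (fun y ↦ (diracProba y).toFiniteMeasure) n x

lemma toMeasure_empiricalMeasure (T : X → X) (x : X) (n : ℕ) :
    (empiricalMeasure T x n : Measure X) =
      (n : ℝ≥0)⁻¹ • ∑ i ∈ Finset.range n, Measure.dirac (T^[i] x) := by
  simp only [empiricalMeasure, birkhoffAverage, birkhoffSum, FiniteMeasure.toMeasure_smul,
    FiniteMeasure.toMeasure_sum]
  rfl

lemma integral_empiricalMeasure [MeasurableSingletonClass X] {E : Type*} [NormedAddCommGroup E]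
    [NormedSpace ℝ E] [CompleteSpace E] (T : X → X) (x : X) (n : ℕ) (g : X → E) :
    ∫ y, g y ∂(empiricalMeasure T x n : Measure X) = birkhoffAverage ℝ T g n x := by
  rw [toMeasure_empiricalMeasure, integral_smul_nnreal_measure,
    integral_finsetSum_measure fun i _ ↦ integrable_dirac enorm_lt_top]
  simp [birkhoffAverage, birkhoffSum, NNReal.smul_def]

lemma mass_empiricalMeasure (T : X → X) (x : X) {n : ℕ} (hn : n ≠ 0) :
    (empiricalMeasure T x n).mass = 1 := by
  rw [← ENNReal.coe_inj, FiniteMeasure.ennreal_mass, toMeasure_empiricalMeasure]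
  have hn' : (n : ℝ≥0) ≠ 0 := Nat.cast_ne_zero.2 hn
  simp [ENNReal.smul_def, ENNReal.coe_inv hn', ENNReal.inv_mul_cancel, hn]

lemma mass_empiricalMeasure_le_one (T : X → X) (x : X) (n : ℕ) :
    (empiricalMeasure T x n).mass ≤ 1 := by
  rcases eq_or_ne n 0 with rfl | hn
  · simp [empiricalMeasure, birkhoffAverage_zero]
  · exact (mass_empiricalMeasure T x hn).le

variable [TopologicalSpace X] {l : Filter ι} {T : X → X} {z : ι → X} {n : ι → ℕ}
  {μ ν : FiniteMeasure X}

lemma tendsto_empiricalMeasure_iff [OpensMeasurableSpace X] [MeasurableSingletonClass X] :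
    Tendsto (fun i ↦ empiricalMeasure T (z i) (n i)) l (𝓝 μ) ↔
      ∀ g : X →ᵇ ℝ, Tendsto (fun i ↦ birkhoffAverage ℝ T g (n i) (z i)) l (𝓝 (∫ x, g x ∂μ)) := by
  simp only [FiniteMeasure.tendsto_iff_forall_integral_tendsto, integral_empiricalMeasure]

lemma isProbabilityMeasure_of_tendsto_empiricalMeasure [OpensMeasurableSpace X] [l.NeBot]
    (hn : Tendsto n l atTop)
    (h : Tendsto (fun i ↦ empiricalMeasure T (z i) (n i)) l (𝓝 ν)) :
    IsProbabilityMeasure (ν : Measure X) := by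
  have hmass : ν.mass = 1 := by
    refine tendsto_nhds_unique_of_eventuallyEq h.mass tendsto_const_nhds ?_
    filter_upwards [hn.eventually_ne_atTop 0] with i hi using mass_empiricalMeasure T (z i) hi
  exact ⟨by rw [← FiniteMeasure.ennreal_mass, hmass, ENNReal.coe_one]⟩

lemma map_eq_of_tendsto_empiricalMeasure [BorelSpace X] [MeasurableSingletonClass X]
    [HasOuterApproxClosed X] [l.NeBot] (hT : Continuous T) (hn : Tendsto n l atTop)
    (h : Tendsto (fun i ↦ empiricalMeasure T (z i) (n i)) l (𝓝 ν)) :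
    ν.map T = ν := by
  refine FiniteMeasure.ext_of_forall_integral_eq fun g ↦ ?_
  rw [FiniteMeasure.toMeasure_map, integral_map hT.aemeasurable g.continuous.aestronglyMeasurable]
  have hcomp : Tendsto (fun i ↦ birkhoffAverage ℝ T g (n i) (T (z i))) l
      (𝓝 (∫ x, g (T x) ∂ν)) := by
    simpa [birkhoffAverage, birkhoffSum, ← Function.iterate_succ_apply,
      Function.iterate_succ_apply'] using
      tendsto_empiricalMeasure_iff.1 h (g.compContinuous ⟨T, hT⟩)
  have hdiff := hcomp.sub (tendsto_empiricalMeasure_iff.1 h g)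
  exact sub_eq_zero.1 <| tendsto_nhds_unique hdiff <|
    tendsto_birkhoffAverage_apply_sub_birkhoffAverage_of_isBounded ℝ T g.isBounded_range z hn

lemma support_subset_of_tendsto_empiricalMeasure_iterate [CompletelyRegularSpace X]
    [OpensMeasurableSpace X] [MeasurableSingletonClass X] [l.NeBot] {K : ℕ} (hK : K ≠ 0)
    (hμ : Tendsto (fun i ↦ empiricalMeasure T (z i) (n i)) l (𝓝 μ))
    (hν : Tendsto (fun i ↦ empiricalMeasure T^[K] (z i) (n i / K)) l (𝓝 ν)) :
    (ν : Measure X).support ⊆ (μ : Measure X).support := by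
  refine support_subset_support_of_integral_le (2 * K) fun g hg ↦ ?_
  exact le_of_tendsto_of_tendsto' (tendsto_empiricalMeasure_iff.1 hν g)
    ((tendsto_empiricalMeasure_iff.1 hμ g).const_mul (2 * (K : ℝ)))
    fun i ↦ birkhoffAverage_iterate_div_le T hg hK (n i) (z i)

theorem empirical_measures_of_power_converge_general [CompactSpace X] [T2Space X]
    [HasOuterApproxClosed X] [BorelSpace X] (hT : Continuous T) (hn : Tendsto n l atTop)
    (hμ : Tendsto (fun i ↦ empiricalMeasure T (z i) (n i)) l (𝓝 μ)) {K : ℕ} (hK : K ≠ 0)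
    (huniq : ∀ ν : FiniteMeasure X, IsProbabilityMeasure (ν : Measure X) → ν.map T^[K] = ν →
      (ν : Measure X).support ⊆ (μ : Measure X).support → ν = μ) :
    Tendsto (fun i ↦ empiricalMeasure T^[K] (z i) (n i / K)) l (𝓝 μ) := by
  have hnK : Tendsto (fun i ↦ n i / K) l atTop := (Nat.tendsto_div_const_atTop hK).comp hn
  have hcompact := isCompact_setOfPred_finiteMeasure_le_of_compactSpace X 1
  refine hcompact.tendsto_nhds_of_unique_mapClusterPt
    (.of_forall fun i ↦ mass_empiricalMeasure_le_one _ _ _) fun ν _ hcluster ↦ ?_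
  obtain ⟨U, hU, hν⟩ := mapClusterPt_iff_ultrafilter.1 hcluster
  have hnKU : Tendsto (fun i ↦ n i / K) U atTop := hnK.mono_left hU
  exact huniq ν (isProbabilityMeasure_of_tendsto_empiricalMeasure hnKU hν)
    (map_eq_of_tendsto_empiricalMeasure (hT.iterate K) hnKU hν)
    (support_subset_of_tendsto_empiricalMeasure_iterate hK (hμ.mono_left hU) hν)

end EmpiricalMeasure

/-- If the empirical measures `m_{T,zₙ,qₙ}` converge to an invariant measure `μ` and the
restriction of `T^K` to `supp μ` is uniquely ergodic (with unique invariant measure `μ`),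
then the empirical measures `m_{T^K, zₙ, ⌊qₙ/K⌋}` also converge to `μ` (weak-* convergence
being tested against continuous functions). -/
theorem empirical_measures_of_power_converge
    {X : Type*} [TopologicalSpace X] [CompactSpace X] [TopologicalSpace.MetrizableSpace X]
    [MeasurableSpace X] [BorelSpace X]
    (T : X ≃ₜ X) (z : ℕ → X) (q : ℕ → ℕ) (hq : Tendsto q atTop atTop)
    (μ : Measure X) (hμp : IsProbabilityMeasure μ) (hμinv : Measure.map ⇑T μ = μ)
    (hconv : ∀ f : C(X, ℝ),
      Tendsto (fun n : ℕ =>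
          ((q n : ℕ) : ℝ)⁻¹ * ∑ i ∈ Finset.range (q n), f ((⇑T)^[i] (z n)))
        atTop (nhds (∫ x, f x ∂μ)))
    (K : ℕ) (hK : 0 < K)
    (huniq : ∀ ν : Measure X, IsProbabilityMeasure ν →
      Measure.map ((⇑T)^[K]) ν = ν → msupport ν ⊆ msupport μ → ν = μ) :
    ∀ f : C(X, ℝ),
      Tendsto (fun n : ℕ =>
          ((q n / K : ℕ) : ℝ)⁻¹ * ∑ i ∈ Finset.range (q n / K), f (((⇑T)^[K])^[i] (z n)))
        atTop (nhds (∫ x, f x ∂μ)) := by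
  intro f
  have hμ : Tendsto (fun n ↦ empiricalMeasure T (z n) (q n)) atTop
      (𝓝 (⟨μ, inferInstance⟩ : FiniteMeasure X)) :=
    tendsto_empiricalMeasure_iff.2 fun g ↦ hconv g.toContinuousMap
  refine tendsto_empiricalMeasure_iff.1 (empirical_measures_of_power_converge_general T.continuous
    hq hμ hK.ne' fun ν hν hmap hsupp ↦ Subtype.ext (huniq ν hν ?_ ?_)) (.mkOfCompact f)
  · exact congrArg FiniteMeasure.toMeasure hmap
  · simpa only [msupport_eq_support, FiniteMeasure.toMeasure_mk] using hsupp
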